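/- Let R be a commutative Noetherian ring and M a nonzero finite R-module. Then grade(M) := min{i : Ext^i_R(M,R) ≠ 0} equals min{depth(R_𝔭) : 𝔭 ∈ Supp(M)}. -/

import Mathlib

open CategoryTheory

noncomputable def extGroup (R : Type) [CommRing R] (i : ℕ) (M N : Type)
    [AddCommGroup M] [Module R M] [AddCommGroup N] [Module R N] : Type :=
  ((Ext R (ModuleCat R) i).obj (Opposite.op (ModuleCat.of R M))).obj (ModuleCat.of R N)

noncomputable instance (R : Type) [CommRing R] (i : ℕ) (M N : Type)
    [AddCommGroup M] [Module R M] [AddCommGroup N] [Module R N] :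
    AddCommGroup (extGroup R i M N) := by unfold extGroup; infer_instance

noncomputable instance (R : Type) [CommRing R] (i : ℕ) (M N : Type)
    [AddCommGroup M] [Module R M] [AddCommGroup N] [Module R N] :
    Module R (extGroup R i M N) := by unfold extGroup; infer_instance

/-- The depth of a Noetherian local ring `A`, i.e. `grade(𝔪, A)`:
the least `i` with `Ext^i_A(A/𝔪, A) ≠ 0`. -/
noncomputable def depthOf (A : Type) [CommRing A] [IsLocalRing A] : ℕ :=
  sInf {i | Nontrivial (extGroup A i (IsLocalRing.ResidueField A) A)}

open CategoryTheory Abelian IsLocalRing RingTheory.Sequence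

/-- `Ext X Y n`, computed in the derived category, vanishes if and only if the cohomology of
`Hom(P, Y)` does, for a projective resolution `P` of `X`. -/
lemma CategoryTheory.ProjectiveResolution.subsingleton_ext_iff_isZero_homology
    {R : Type} [CommRing R] {X Y : ModuleCat.{0} R} (P : ProjectiveResolution X) (n : ℕ) :
    Subsingleton (Abelian.Ext X Y n) ↔
      Limits.IsZero ((P.complex.linearYonedaObj R Y).homology n) := by
  rw [← HomologicalComplex.exactAt_iff_isZero_homology]
  obtain _ | n := n
  · rw [HomologicalComplex.exactAt_iff' _ 0 0 1 (by simp) (by simp),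
      ShortComplex.moduleCat_exact_iff]
    trans Subsingleton (X ⟶ Y)
    · exact Ext.addEquiv₀.subsingleton_congr
    obtain ⟨π, hπ, hd, hdesc⟩ : ∃ π : P.complex.X 0 ⟶ X, Epi π ∧ P.complex.d 1 0 ≫ π = 0 ∧
        ∀ f : P.complex.X 0 ⟶ Y, P.complex.d 1 0 ≫ f = 0 → ∃ g, π ≫ g = f :=
      ⟨P.π.f 0, inferInstanceAs (Epi (P.π.f 0)), P.complex_d_comp_π_f_zero,
        fun f hf ↦ ⟨P.exact₀.desc f hf, P.exact₀.g_desc f hf⟩⟩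
    constructor
    · intro h (f : P.complex.X 0 ⟶ Y) (hf : P.complex.d 1 0 ≫ f = 0)
      obtain ⟨g, rfl⟩ := hdesc f hf
      refine ⟨0, ?_⟩
      rw [Subsingleton.elim g 0, Limits.comp_zero, map_zero]
      rfl
    · intro h
      refine subsingleton_of_forall_eq 0 fun f ↦ ?_
      obtain ⟨g, hg⟩ := h (π ≫ f) (by
        change P.complex.d 1 0 ≫ π ≫ f = 0
        rw [reassoc_of% hd, Limits.zero_comp])
      have h0 : (P.complex.linearYonedaObj R Y).d 0 0 = 0 :=
        (P.complex.linearYonedaObj R Y).shape 0 0 (by simp)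
      have hz : π ≫ f = 0 := by
        rw [← hg]
        exact congr($(h0).hom g)
      exact Limits.zero_of_epi_comp _ hz
  · rw [HomologicalComplex.exactAt_iff' _ n (n + 1) (n + 2) (by simp) (by simp),
      ShortComplex.moduleCat_exact_iff]
    constructor
    · intro h (f : P.complex.X (n + 1) ⟶ Y) (hf : P.complex.d (n + 2) (n + 1) ≫ f = 0)
      exact (P.extMk_eq_zero_iff f (n + 2) rfl hf n rfl).mp (Subsingleton.elim _ _)
    · intro h
      refine subsingleton_of_forall_eq 0 fun α ↦ ?_
      obtain ⟨f, hf, rfl⟩ := P.extMk_surjective α (n + 2) rfl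
      exact (P.extMk_eq_zero_iff f (n + 2) rfl hf n rfl).mpr (h f hf)

lemma nontrivial_extGroup_iff (R : Type) [CommRing R] (i : ℕ) (M N : Type)
    [AddCommGroup M] [Module R M] [AddCommGroup N] [Module R N] :
    Nontrivial (extGroup R i M N) ↔
      Nontrivial (Abelian.Ext (ModuleCat.of R M) (ModuleCat.of R N) i) := by
  let P := projectiveResolution (ModuleCat.of R M)
  rw [← not_subsingleton_iff_nontrivial, ← not_subsingleton_iff_nontrivial,
    P.subsingleton_ext_iff_isZero_homology, not_iff_not,
    ← (P.isoExt (R := R) i (ModuleCat.of R N)).isZero_iff]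
  exact ModuleCat.isZero_iff_subsingleton.symm

/-- The length of a regular sequence contained in an ideal is bounded by the dimension of the
localization at any prime containing that ideal. -/
lemma length_le_ringKrullDim_localization_of_isRegular {R : Type} [CommRing R]
    [IsNoetherianRing R] (p : Ideal R) [p.IsPrime] {rs : List R} (reg : IsRegular R rs)
    (mem : ∀ r ∈ rs, r ∈ p) : (rs.length : WithBot ℕ∞) ≤ ringKrullDim (Localization.AtPrime p) := by
  have reg' := reg.1.isRegular_of_isLocalization_of_mem (Localization.AtPrime p) p mem
  have h := ringKrullDim_add_length_eq_ringKrullDim_of_isRegular _ reg'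
  rw [List.length_map] at h
  have : Nontrivial (Localization.AtPrime p ⧸
      Ideal.ofList (rs.map (algebraMap R (Localization.AtPrime p)))) := by
    rw [Ideal.Quotient.nontrivial_iff]
    intro htop
    exact reg'.2 (by simp [htop])
  rw [← h]
  exact le_add_of_nonneg_left ringKrullDim_nonneg_of_nontrivial

lemma annihilator_smul_top_lt_top (R : Type) [CommRing R] (M : Type) [AddCommGroup M] [Module R M]
    [Nontrivial M] : Module.annihilator R M • (⊤ : Submodule R R) < ⊤ := by
  rw [smul_eq_mul, Ideal.mul_top, lt_top_iff_ne_top, ne_eq, Module.annihilator_eq_top_iff]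
  exact not_subsingleton M

/-- A nonzero finite module over a Noetherian ring has finite grade. -/
lemma exists_nontrivial_ext (R : Type) [CommRing R] [IsNoetherianRing R]
    (M : Type) [AddCommGroup M] [Module R M] [Module.Finite R M] [Nontrivial M] :
    ∃ i, Nontrivial (Abelian.Ext (ModuleCat.of R M) (ModuleCat.of R R) i) := by
  by_contra! h
  have hlt := annihilator_smul_top_lt_top R M
  obtain ⟨p, hp, hle⟩ := Ideal.exists_le_maximal (Module.annihilator R M) (by
    simpa [lt_top_iff_ne_top] using hlt)
  obtain ⟨d, hd⟩ : ∃ d : ℕ, ringKrullDim (Localization.AtPrime p) < d := by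
    obtain ⟨e, he⟩ := WithBot.ne_bot_iff_exists.mp
      (ringKrullDim_ne_bot (R := Localization.AtPrime p))
    have htop := ringKrullDim_ne_top (R := Localization.AtPrime p)
    rw [← he] at htop ⊢
    obtain ⟨d, rfl⟩ := ENat.ne_top_iff_exists.mp (fun h ↦ htop (congr_arg _ h))
    exact ⟨d + 1, by exact_mod_cast d.lt_succ_self⟩
  obtain ⟨rs, hlen, hmem, hreg⟩ := ModuleCat.exists_isRegular_of_exists_subsingleton_ext
    (Module.annihilator R M) d (ModuleCat.of R R) hlt (ModuleCat.of R M)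
    Module.support_eq_zeroLocus (fun i _ ↦ h i)
  have := length_le_ringKrullDim_localization_of_isRegular p hreg (fun r hr ↦ hle (hmem r hr))
  rw [hlen] at this
  exact absurd hd this.not_gt

/-- If the `Ext`-modules `Ext M R i` vanish below `n`, then the depth of the localization of `R` at
any prime in the support of `M` is at least `n`. -/
lemma subsingleton_ext_residueField_localization (R : Type) [CommRing R] [IsNoetherianRing R]
    (M : Type) [AddCommGroup M] [Module R M] [Module.Finite R M] [Nontrivial M] (n : ℕ)
    (h : ∀ i < n, Subsingleton (Abelian.Ext (ModuleCat.of R M) (ModuleCat.of R R) i))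
    (p : Ideal R) [p.IsPrime] (hp : Module.annihilator R M ≤ p) :
    ∀ i < n, Subsingleton (Abelian.Ext
      (ModuleCat.of (Localization.AtPrime p) (ResidueField (Localization.AtPrime p)))
      (ModuleCat.of (Localization.AtPrime p) (Localization.AtPrime p)) i) := by
  obtain ⟨rs, hlen, hmem, hreg⟩ := ModuleCat.exists_isRegular_of_exists_subsingleton_ext
    (Module.annihilator R M) n (ModuleCat.of R R) (annihilator_smul_top_lt_top R M)
    (ModuleCat.of R M) Module.support_eq_zeroLocus h
  have mem : ∀ r ∈ rs, r ∈ p := fun r hr ↦ hp (hmem r hr)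
  have reg := hreg.1.isRegular_of_isLocalization_of_mem (Localization.AtPrime p) p mem
  intro i hi
  have : Module.Finite (Localization.AtPrime p) (ResidueField (Localization.AtPrime p)) :=
    Module.Finite.of_surjective (Algebra.linearMap _ _) residue_surjective
  refine ModuleCat.subsingleton_ext_of_exists_isRegular (maximalIdeal (Localization.AtPrime p))
    (ModuleCat.of _ (ResidueField (Localization.AtPrime p))) ?_
    (ModuleCat.of _ (Localization.AtPrime p)) ?_ _ ?_ reg i (by simpa [hlen] using hi)
  · rw [Module.support_eq_zeroLocus]
    have hann : Module.annihilator (Localization.AtPrime p)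
        (ResidueField (Localization.AtPrime p)) = maximalIdeal (Localization.AtPrime p) :=
      Ideal.annihilator_quotient
    exact subset_of_eq (by rw [← hann])
  · change maximalIdeal (Localization.AtPrime p) • (⊤ : Ideal (Localization.AtPrime p)) < ⊤
    rw [smul_eq_mul, Ideal.mul_top, lt_top_iff_ne_top]
    exact Ideal.IsPrime.ne_top'
  · intro r hr
    obtain ⟨s, hs, rfl⟩ := List.mem_map.mp hr
    exact (IsLocalization.AtPrime.to_map_mem_maximal_iff _ p s).mpr (mem s hs)

/-- If `p` is an associated prime of `N`, there is a nonzero map from the residue field at `p`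
to the localization of `N` at `p`. -/
lemma nontrivial_linearMap_residueField_of_isAssociatedPrime {R : Type} [CommRing R]
    [IsNoetherianRing R] {N N' : Type} [AddCommGroup N] [Module R N] (p : Ideal R) [p.IsPrime]
    (hp : IsAssociatedPrime p N) [AddCommGroup N'] [Module R N']
    [Module (Localization.AtPrime p) N'] [IsScalarTower R (Localization.AtPrime p) N']
    (f : N →ₗ[R] N') [IsLocalizedModule p.primeCompl f] :
    Nontrivial (ResidueField (Localization.AtPrime p) →ₗ[Localization.AtPrime p] N') := by
  obtain ⟨-, y, hy⟩ := isAssociatedPrime_iff.mp hp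
  have hmem (r : R) : r ∈ p ↔ r • y = 0 := by
    rw [hy, Submodule.mem_colon_singleton, Submodule.mem_bot]
  have hle : maximalIdeal (Localization.AtPrime p) ≤
      LinearMap.ker (LinearMap.toSpanSingleton (Localization.AtPrime p) N' (f y)) := by
    rw [← Localization.AtPrime.map_eq_maximalIdeal, Ideal.map_le_iff_le_comap]
    intro r hr
    rw [Ideal.mem_comap, LinearMap.mem_ker, LinearMap.toSpanSingleton_apply, algebraMap_smul,
      ← map_smul, (hmem r).mp hr, map_zero]
  refine nontrivial_of_ne (Submodule.liftQ (maximalIdeal (Localization.AtPrime p)) _ hle) 0 ?_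
  intro h0
  have h1 : f y = 0 := by
    have := congr($h0 (Submodule.Quotient.mk 1))
    rw [Submodule.liftQ_apply, LinearMap.toSpanSingleton_apply, one_smul] at this
    exact this
  obtain ⟨s, hs⟩ := (IsLocalizedModule.eq_zero_iff p.primeCompl f).mp h1
  exact s.2 ((hmem s).mpr hs)

/-- If there is a nonzero map from `M` to `N`, then there is a prime in the support of `M` at which
the depth of `N` is zero. -/
lemma exists_nontrivial_ext_residueField_of_nontrivial_linearMap {R : Type} [CommRing R]
    [IsNoetherianRing R] (M N : ModuleCat.{0} R) (n : ℕ) [Nontrivial (M →ₗ[R] N)] :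
    ∃ (p : Ideal R) (_ : p.IsPrime), Module.annihilator R M ≤ p ∧ ∃ i ≤ n,
      Nontrivial (Abelian.Ext
        (ModuleCat.of (Localization.AtPrime p) (ResidueField (Localization.AtPrime p)))
        (N.localizedModule p.primeCompl) i) := by
  obtain ⟨f, hf⟩ := exists_ne (0 : M →ₗ[R] N)
  obtain ⟨m, hm⟩ := DFunLike.ne_iff.mp hf
  obtain ⟨p, hp, hle⟩ := exists_le_isAssociatedPrime_of_isNoetherianRing R (f m) hm
  have := hp.isPrime
  refine ⟨p, this, le_trans (fun r hr ↦ ?_) hle, 0, n.zero_le, ?_⟩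
  · rw [Submodule.mem_colon_singleton, Submodule.mem_bot, ← map_smul,
      Module.mem_annihilator.mp hr, map_zero]
  · have := nontrivial_linearMap_residueField_of_isAssociatedPrime p hp
      (N.localizedModuleMkLinearMap p.primeCompl)
    exact (Ext.addEquiv₀.trans ModuleCat.homAddEquiv).toEquiv.nontrivial

/-- If `Ext M N n` is nonzero, then there is a prime in the support of `M` at which the depth of `N`
is at most `n`. -/
lemma exists_nontrivial_ext_residueField {R : Type} [CommRing R] [IsNoetherianRing R]
    (M : ModuleCat.{0} R) [Module.Finite R M] (n : ℕ) (N : ModuleCat.{0} R) [Module.Finite R N]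
    (h : Nontrivial (Abelian.Ext M N n)) :
    ∃ (p : Ideal R) (_ : p.IsPrime), Module.annihilator R M ≤ p ∧ ∃ i ≤ n,
      Nontrivial (Abelian.Ext
        (ModuleCat.of (Localization.AtPrime p) (ResidueField (Localization.AtPrime p)))
        (N.localizedModule p.primeCompl) i) := by
  induction n generalizing N with
  | zero =>
    have := (Ext.addEquiv₀.trans (ModuleCat.homAddEquiv (M := M) (N := N))).symm.toEquiv.nontrivial
    exact exists_nontrivial_ext_residueField_of_nontrivial_linearMap M N 0
  | succ n ih =>
    by_cases h0 : Nontrivial (M →ₗ[R] N)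
    · exact exists_nontrivial_ext_residueField_of_nontrivial_linearMap M N (n + 1)
    rw [not_nontrivial_iff_subsingleton] at h0
    obtain ⟨x, hx, hreg⟩ := IsSMulRegular.subsingleton_linearMap_iff.mp h0
    have hQ : Nontrivial (Abelian.Ext M (ModuleCat.of R (QuotSMulTop x N)) n) := by
      by_contra! hQ
      obtain ⟨α, hα⟩ := exists_ne (0 : Abelian.Ext M N (n + 1))
      have hzero := congr($(Ext.postcomp_smul_id_eq_zero_of_mem_annihilator (M := N) hx (n + 1)) α)
      obtain ⟨β, rfl⟩ := Ext.covariant_sequence_exact₁ M hreg.smulShortComplex_shortExact α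
        hzero rfl
      have hβ : β = 0 := hQ.elim _ _
      exact hα (by rw [hβ, Ext.zero_comp]; rfl)
    obtain ⟨p, hp, hle, i, hi, hE⟩ := ih _ hQ
    have hS := hreg.smulShortComplex_shortExact.map_of_exact
      (ModuleCat.localizedModuleFunctor p.primeCompl)
    refine ⟨p, hp, hle, ?_⟩
    by_contra! hall
    obtain ⟨γ, hγ⟩ := @exists_ne _ hE 0
    have h1 := hall i (by omega)
    have h2 := hall (i + 1) (by omega)
    obtain ⟨δ, rfl⟩ := Ext.covariant_sequence_exact₃ _ hS γ rfl (h2.elim _ _)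
    have hδ : δ = 0 := h1.elim _ _
    exact hγ (by rw [hδ, Ext.zero_comp]; rfl)

/-- The localization of `R` as an object of `ModuleCat` is the localization of `R` as a ring. -/
noncomputable def ModuleCat.localizedModuleSelfIso {R : Type} [CommRing R] (S : Submonoid R) :
    (ModuleCat.of R R).localizedModule S ≅ ModuleCat.of (Localization S) (Localization S) :=
  have : IsLocalizedModule S (M := R) ((ModuleCat.of R R).localizedModuleMkLinearMap S) :=
    ModuleCat.localizedModule_isLocalizedModule (ModuleCat.of R R) S
  LinearEquiv.toModuleIso <|
    (IsLocalizedModule.linearEquiv S ((ModuleCat.of R R).localizedModuleMkLinearMap S)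
      (Algebra.linearMap R (Localization S))).extendScalarsOfIsLocalization S (Localization S)

/-- For a commutative Noetherian ring `R` and a nonzero finite `R`-module `M`,
`grade M = min {i | Ext^i_R(M,R) ≠ 0}` equals `min {depth R_𝔭 | 𝔭 ∈ Supp M}`. -/
theorem grade_eq_min_depth_support
    (R : Type) [CommRing R] [IsNoetherianRing R]
    (M : Type) [AddCommGroup M] [Module R M] [Module.Finite R M] [Nontrivial M] :
    sInf {i | Nontrivial (extGroup R i M R)} =
      sInf {d | ∃ (𝔭 : Ideal R) (h : 𝔭.IsPrime),
        haveI := h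
        Nontrivial (LocalizedModule 𝔭.primeCompl M) ∧
          d = depthOf (Localization.AtPrime 𝔭)} := by
  have hsupp (p : Ideal R) [hp : p.IsPrime] :
      Nontrivial (LocalizedModule p.primeCompl M) ↔ Module.annihilator R M ≤ p :=
    Module.mem_support_iff_of_finite (p := ⟨p, hp⟩)
  simp only [depthOf, nontrivial_extGroup_iff]
  set G := {i | Nontrivial (Abelian.Ext (ModuleCat.of R M) (ModuleCat.of R R) i)}
  have hGmem : sInf G ∈ G := Nat.sInf_mem (exists_nontrivial_ext R M)
  have lower (p : Ideal R) [p.IsPrime] (hle : Module.annihilator R M ≤ p) :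
      sInf G ≤ sInf {i | Nontrivial (Abelian.Ext
        (ModuleCat.of (Localization.AtPrime p) (ResidueField (Localization.AtPrime p)))
        (ModuleCat.of (Localization.AtPrime p) (Localization.AtPrime p)) i)} := by
    have : Module.Finite (Localization.AtPrime p) (ResidueField (Localization.AtPrime p)) :=
      Module.Finite.of_surjective (Algebra.linearMap _ _) residue_surjective
    refine le_csInf (exists_nontrivial_ext (Localization.AtPrime p)
      (ResidueField (Localization.AtPrime p))) fun i hi ↦ ?_
    by_contra! hlt
    exact not_nontrivial_iff_subsingleton.mpr
      (subsingleton_ext_residueField_localization R M (sInf G)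
        (fun j hj ↦ not_nontrivial_iff_subsingleton.mp (Nat.notMem_of_lt_sInf hj)) p hle i hlt) hi
  obtain ⟨p, hp, hle, i, hi, hE⟩ :=
    exists_nontrivial_ext_residueField (ModuleCat.of R M) (sInf G) (ModuleCat.of R R) hGmem
  apply le_antisymm
  · refine le_csInf ⟨_, p, hp, (hsupp p).mpr hle, rfl⟩ ?_
    rintro _ ⟨q, hq, hM, rfl⟩
    exact lower q ((hsupp q).mp hM)
  · refine le_trans (Nat.sInf_le ⟨p, hp, (hsupp p).mpr hle, rfl⟩) (le_trans (Nat.sInf_le ?_) hi)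
    exact @Equiv.nontrivial _ _ (((extFunctorObj _ i).mapIso
      (ModuleCat.localizedModuleSelfIso p.primeCompl)).addCommGroupIsoToAddEquiv).symm.toEquiv hE
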